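/- The restrictions of A and A* to W generate the ℂ-algebra End(W) of all ℂ-linear transformations from W to W; moreover, the restrictions of A and E*_r generate End(W), and the restrictions of A* and E_t generate End(W). -/

import Mathlib

open Matrix
open scoped Classical

noncomputable section

/-- The full setup: a `Q`-polynomial distance-regular graph `Γ = (X,R)` of diameter `D ≥ 3`,
with adjacency matrix `A`, primitive idempotents `E_i`, eigenvalues `θ_i`,
Krein parameters `q^h_{ij}`, a fixed base vertex `x`, dual primitive idempotents `E*_i`,
dual adjacency matrix `A*` and dual eigenvalues `θ*_i`. -/
structure TSetup (X : Type*) [Fintype X] [DecidableEq X] where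
  G : SimpleGraph X
  hGconn : G.Connected
  D : ℕ
  hD3 : 3 ≤ D
  hDiamLe : ∀ y z : X, G.dist y z ≤ D
  hDiamEq : ∃ y z : X, G.dist y z = D
  p : ℕ → ℕ → ℕ → ℕ
  hDRG : ∀ h i j : ℕ, h ≤ D → i ≤ D → j ≤ D → ∀ y z : X, G.dist y z = h →
    Nat.card {w : X // G.dist y w = i ∧ G.dist z w = j} = p h i j
  A : Matrix X X ℂ
  hA : ∀ y z : X, A y z = if G.Adj y z then 1 else 0
  E : ℕ → Matrix X X ℂ
  hEzero : ∀ i : ℕ, D < i → E i = 0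
  hEsum : ∑ i ∈ Finset.range (D + 1), E i = 1
  hEidem : ∀ i j : ℕ, i ≤ D → j ≤ D → E i * E j = if i = j then E i else 0
  hEsymm : ∀ i : ℕ, (E i)ᵀ = E i
  hEreal : ∀ i : ℕ, (E i).map (starRingEnd ℂ) = E i
  hE0 : E 0 = (Fintype.card X : ℂ)⁻¹ • Matrix.of (fun _ _ => (1 : ℂ))
  θ : ℕ → ℝ
  hθinj : ∀ i j : ℕ, i ≤ D → j ≤ D → θ i = θ j → i = j
  hAspec : A = ∑ i ∈ Finset.range (D + 1), (θ i : ℂ) • E i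
  q : ℕ → ℕ → ℕ → ℝ
  hKrein : ∀ i j : ℕ, i ≤ D → j ≤ D →
    Matrix.hadamard (E i) (E j) =
      (Fintype.card X : ℂ)⁻¹ • ∑ h ∈ Finset.range (D + 1), (q h i j : ℂ) • E h
  hQpoly0 : ∀ h i j : ℕ, h ≤ D → i ≤ D → j ≤ D →
    (i + j < h ∨ h + j < i ∨ h + i < j) → q h i j = 0
  hQpoly1 : ∀ h i j : ℕ, h ≤ D → i ≤ D → j ≤ D →
    (h = i + j ∨ i = h + j ∨ j = h + i) → q h i j ≠ 0
  x : X
  Estar : ℕ → Matrix X X ℂ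
  hEstarzero : ∀ i : ℕ, D < i → Estar i = 0
  hEstar : ∀ i : ℕ, i ≤ D → ∀ y z : X,
    Estar i y z = if y = z ∧ G.dist x y = i then 1 else 0
  Astar : Matrix X X ℂ
  hAstar : ∀ y z : X, Astar y z = if y = z then (Fintype.card X : ℂ) * E 1 x y else 0
  θstar : ℕ → ℝ
  hθstarinj : ∀ i j : ℕ, i ≤ D → j ≤ D → θstar i = θstar j → i = j
  hAstarspec : Astar = ∑ i ∈ Finset.range (D + 1), (θstar i : ℂ) • Estar i

variable {X : Type*} [Fintype X] [DecidableEq X]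

/-- The Terwilliger algebra `T = T(x)`, generated by `A` and `A*`. -/
def TSetup.T (S : TSetup X) : Subalgebra ℂ (Matrix X X ℂ) :=
  Algebra.adjoin ℂ {S.A, S.Astar}

/-- A thin irreducible `T`-module `W` with endpoint `r`, dual endpoint `t` and diameter `d`,
where `E*_i W ≠ 0` iff `r ≤ i ≤ r + d` and `E_i W ≠ 0` iff `t ≤ i ≤ t + d`. -/
structure TMod (S : TSetup X) where
  W : Submodule ℂ (X → ℂ)
  hWinv : ∀ B ∈ S.T, ∀ w ∈ W, B *ᵥ w ∈ W
  hWne : W ≠ ⊥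
  hWirr : ∀ U : Submodule ℂ (X → ℂ), U ≤ W →
    (∀ B ∈ S.T, ∀ w ∈ U, B *ᵥ w ∈ U) → U = ⊥ ∨ U = W
  hthin : ∀ i : ℕ, Module.finrank ℂ (W.map (S.Estar i).mulVecLin) ≤ 1
  r : ℕ
  t : ℕ
  d : ℕ
  hr : ∀ i : ℕ, W.map (S.Estar i).mulVecLin ≠ ⊥ ↔ r ≤ i ∧ i ≤ r + d
  ht : ∀ i : ℕ, W.map (S.E i).mulVecLin ≠ ⊥ ↔ t ≤ i ∧ i ≤ t + d

open Classical in
/-- The action of a matrix `B` on `W` (the restriction of `B` to `W`; defined to be `0`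
if `B` does not leave `W` invariant). -/
def actW (S : TSetup X) (M : TMod S) (B : Matrix X X ℂ) : M.W →ₗ[ℂ] M.W :=
  if h : ∀ w ∈ M.W, B.mulVecLin w ∈ M.W then B.mulVecLin.restrict h else 0

/-- `tr_W(B)`: the trace of the action of `B` on `W`. -/
def trW (S : TSetup X) (M : TMod S) (B : Matrix X X ℂ) : ℂ :=
  LinearMap.trace ℂ M.W (actW S M B)

/-- `a_i(W) = tr_W(E*_{r+i} A)`. -/
def aW (S : TSetup X) (M : TMod S) (i : ℕ) : ℂ :=
  trW S M (S.Estar (M.r + i) * S.A)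

/-- `x_i(W) = tr_W(E*_{r+i} A E*_{r+i-1} A)`, with `x_0(W) = 0`. -/
def xW (S : TSetup X) (M : TMod S) (i : ℕ) : ℂ :=
  if i = 0 then 0 else trW S M (S.Estar (M.r + i) * S.A * S.Estar (M.r + i - 1) * S.A)

/-- `a*_i(W) = tr_W(E_{t+i} A*)`. -/
def astarW (S : TSetup X) (M : TMod S) (i : ℕ) : ℂ :=
  trW S M (S.E (M.t + i) * S.Astar)

/-- `x*_i(W) = tr_W(E_{t+i} A* E_{t+i-1} A*)`, with `x*_0(W) = 0`. -/
def xstarW (S : TSetup X) (M : TMod S) (i : ℕ) : ℂ :=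
  if i = 0 then 0 else trW S M (S.E (M.t + i) * S.Astar * S.E (M.t + i - 1) * S.Astar)

/-- The polynomials `p_i`: `p_0 = 1`, `p_{-1} = 0`,
`λ p_i = p_{i+1} + a_i(W) p_i + x_i(W) p_{i-1}`. -/
def pW (S : TSetup X) (M : TMod S) : ℕ → Polynomial ℂ
  | 0 => 1
  | 1 => Polynomial.X - Polynomial.C (aW S M 0)
  | (n + 2) =>
      (Polynomial.X - Polynomial.C (aW S M (n + 1))) * pW S M (n + 1)
        - Polynomial.C (xW S M (n + 1)) * pW S M n

/-- The polynomials `p*_i`: `p*_0 = 1`, `p*_{-1} = 0`,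
`λ p*_i = p*_{i+1} + a*_i(W) p*_i + x*_i(W) p*_{i-1}`. -/
def pstarW (S : TSetup X) (M : TMod S) : ℕ → Polynomial ℂ
  | 0 => 1
  | 1 => Polynomial.X - Polynomial.C (astarW S M 0)
  | (n + 2) =>
      (Polynomial.X - Polynomial.C (astarW S M (n + 1))) * pstarW S M (n + 1)
        - Polynomial.C (xstarW S M (n + 1)) * pstarW S M n

/-- The Hermitian inner product `⟨u,v⟩ = Σ_y u_y conj(v_y)` on `ℂ^X`. -/
def herm (u v : X → ℂ) : ℂ := ∑ y, u y * (starRingEnd ℂ) (v y)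

/-- `ν(W)`, the multiplicative inverse of `m_0(W) = tr_W(E_t E*_r)`. -/
def nuW (S : TSetup X) (M : TMod S) : ℂ :=
  (trW S M (S.E M.t * S.Estar M.r))⁻¹

/-- `k_i(W) = ν(W) m*_i(W)` where `m*_i(W) = tr_W(E*_{r+i} E_t)`. -/
def kW (S : TSetup X) (M : TMod S) (i : ℕ) : ℂ :=
  nuW S M * trW S M (S.Estar (M.r + i) * S.E M.t)

/-- `k*_i(W) = ν(W) m_i(W)` where `m_i(W) = tr_W(E_{t+i} E*_r)`. -/
def kstarW (S : TSetup X) (M : TMod S) (i : ℕ) : ℂ :=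
  nuW S M * trW S M (S.E (M.t + i) * S.Estar M.r)

/-! On `W` the matrices `A` and `A*` act as a Leonard system: each is diagonalizable with
one-dimensional eigenspaces and irreducible tridiagonal with respect to the idempotents of the
other. The far off-diagonal blocks vanish by the triangle inequality for `A`, and for `A*` because
of the vanishing Krein parameters; the adjacent blocks do not vanish because `W` is irreducible.

In an eigenbasis of `A*` the idempotent `E*_r` is the matrix unit `e₀₀`, and multiplying it
repeatedly by the irreducible tridiagonal matrix of `A` from the left and from the right gives every
`eᵢ₀` and `e₀ⱼ`, hence every matrix unit. As `E*_r` is a polynomial in `A*`, the pair `A, A*` also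
generates `End(W)`; the pair `A*, E_t` is the dual case. -/

section SpectralDecomposition

theorem aeval_sum_smul_idempotents {K R ι : Type*} [CommSemiring K] [Semiring R] [Algebra K R]
    [Fintype ι] {e : ι → R} (he : CompleteOrthogonalIdempotents e) (θ : ι → K) (p : Polynomial K) :
    Polynomial.aeval (∑ i, θ i • e i) p = ∑ i, p.eval (θ i) • e i := by
  induction p using Polynomial.induction_on' with
  | add p q hp hq => simp only [map_add, hp, hq, Polynomial.eval_add, add_smul,
      Finset.sum_add_distrib]
  | monomial n c =>
    have hpow : (∑ i, θ i • e i) ^ n = ∑ i, θ i ^ n • e i := by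
      induction n with
      | zero => simp [he.complete]
      | succ n ih => simp [pow_succ, ih, Finset.sum_mul_sum, he.mul_eq, smul_smul, mul_comm]
    simp [Polynomial.aeval_monomial, hpow, ← Algebra.smul_def, Finset.smul_sum, smul_smul]

variable {K R R' ι : Type*} [Field K] [Ring R] [Algebra K R] [Ring R'] [Algebra K R'] [Fintype ι]

variable (K) in
/-- A spectral decomposition of an element `a` of a `K`-algebra: complete orthogonal idempotents
`e i` and distinct scalars `θ i` with `a = ∑ i, θ i • e i`. The idempotents may vanish, so that the
notion is preserved by algebra homomorphisms. -/
structure IsSpectralDecomposition (a : R) (e : ι → R) : Prop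
    extends CompleteOrthogonalIdempotents e where
  exists_eigenvalues : ∃ θ : ι → K, Function.Injective θ ∧ a = ∑ i, θ i • e i

namespace IsSpectralDecomposition

variable {a : R} {e : ι → R}

theorem mem_adjoin (h : IsSpectralDecomposition K a e) (i : ι) :
    e i ∈ Algebra.adjoin K {a} := by
  obtain ⟨θ, hθ, rfl⟩ := h.exists_eigenvalues
  have heval (j : ι) : (Lagrange.basis Finset.univ θ i).eval (θ j) = if i = j then 1 else 0 := by
    split_ifs with hij
    · rw [← hij, Lagrange.eval_basis_self hθ.injOn (Finset.mem_univ i)]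
    · rw [Lagrange.eval_basis_of_ne hij (Finset.mem_univ j)]
  have hlagrange :
      Polynomial.aeval (∑ j, θ j • e j) (Lagrange.basis Finset.univ θ i) = e i := by
    simp [aeval_sum_smul_idempotents h.toCompleteOrthogonalIdempotents, heval]
  exact hlagrange ▸ Polynomial.aeval_mem_adjoin_singleton K _

theorem mul_mul_eq_zero (h : IsSpectralDecomposition K a e) {i j : ι} (hij : i ≠ j) :
    e i * a * e j = 0 := by
  obtain ⟨θ, -, rfl⟩ := h.exists_eigenvalues
  have hsum : e i * ∑ k, θ k • e k = θ i • e i := by simp [Finset.mul_sum, h.mul_eq]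
  rw [hsum, smul_mul_assoc, h.ortho hij, smul_zero]

theorem map (h : IsSpectralDecomposition K a e) (f : R →ₐ[K] R') :
    IsSpectralDecomposition K (f a) (fun i => f (e i)) where
  toCompleteOrthogonalIdempotents := h.toCompleteOrthogonalIdempotents.map f.toRingHom
  exists_eigenvalues := by
    obtain ⟨θ, hθ, rfl⟩ := h.exists_eigenvalues
    exact ⟨θ, hθ, by simp only [map_sum, map_smul]⟩

theorem of_map {f : R →ₐ[K] R'} (hf : Function.Injective f)
    (h : IsSpectralDecomposition K (f a) (fun i => f (e i))) : IsSpectralDecomposition K a e where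
  toCompleteOrthogonalIdempotents :=
    (CompleteOrthogonalIdempotents.map_injective_iff f.toRingHom hf).1
      h.toCompleteOrthogonalIdempotents
  exists_eigenvalues := by
    obtain ⟨θ, hθ, ha⟩ := h.exists_eigenvalues
    exact ⟨θ, hθ, hf (by simpa only [map_sum, map_smul] using ha)⟩

theorem comp_embedding {κ : Type*} [Fintype κ] (h : IsSpectralDecomposition K a e) (f : κ ↪ ι)
    (hf : ∀ i ∉ Set.range f, e i = 0) : IsSpectralDecomposition K a (e ∘ f) where
  toOrthogonalIdempotents := h.toOrthogonalIdempotents.embedding f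
  complete := by
    rw [← h.complete]
    exact Fintype.sum_of_injective f f.injective _ e hf fun _ => rfl
  exists_eigenvalues := by
    obtain ⟨θ, hθ, rfl⟩ := h.exists_eigenvalues
    exact ⟨θ ∘ f, hθ.comp f.injective, (Fintype.sum_of_injective f f.injective _ _
      (fun i hi => by rw [hf i hi, smul_zero]) fun _ => rfl).symm⟩

theorem of_eq_zero_of_notMem_Icc {n d k : ℕ} {e : ℕ → R}
    (h : IsSpectralDecomposition K a fun i : Fin (n + 1) => e i) (hk : k + d ≤ n)
    (he : ∀ i ≤ n, i ∉ Set.Icc k (k + d) → e i = 0) :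
    IsSpectralDecomposition K a fun i : Fin (d + 1) => e (k + i) := by
  let f : Fin (d + 1) ↪ Fin (n + 1) := (Fin.natAddEmb k).trans (Fin.castLEEmb (by omega))
  refine h.comp_embedding f fun i hi => he i i.is_le fun hmem => hi ?_
  exact ⟨⟨i - k, by have := hmem.2; omega⟩, Fin.ext (Nat.add_sub_cancel' hmem.1)⟩

end IsSpectralDecomposition

end SpectralDecomposition

section IdempotentEndomorphisms

variable {K V ι : Type*} [Field K] [AddCommGroup V] [Module K V] {P : ι → Module.End K V}

theorem exists_linearIndependent_of_idempotents (hP : OrthogonalIdempotents P)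
    (hP0 : ∀ i, P i ≠ 0) : ∃ v : ι → V, LinearIndependent K fun i => P i (v i) := by
  choose v hv using fun i => DFunLike.ne_iff.1 (hP0 i)
  refine ⟨v, linearIndependent_iff'.2 fun s g hg j hj => ?_⟩
  have hmul (i : ι) : P j (P i (v i)) = if j = i then P j (v j) else 0 := by
    rw [← Module.End.mul_apply, hP.mul_eq]
    split_ifs with hij
    · rw [hij]
    · rfl
  have hgj : g j • P j (v j) = 0 := by simpa [hmul, hj] using congrArg (P j) hg
  exact (smul_eq_zero.1 hgj).resolve_right (hv j)

variable [Fintype ι]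

theorem exists_basis_toMatrixAlgEquiv_eq_single [DecidableEq ι] [Nonempty ι]
    (hP : CompleteOrthogonalIdempotents P) (hP0 : ∀ i, P i ≠ 0)
    (hcard : Fintype.card ι = Module.finrank K V) :
    ∃ b : Module.Basis ι K V, ∀ i, LinearMap.toMatrixAlgEquiv b (P i) = single i i 1 := by
  obtain ⟨v, hv⟩ := exists_linearIndependent_of_idempotents hP.toOrthogonalIdempotents hP0
  let b := basisOfLinearIndependentOfCardEqFinrank hv hcard
  have hPb (i j : ι) : P i (b j) = if i = j then b j else 0 := by
    simp only [b, coe_basisOfLinearIndependentOfCardEqFinrank, ← Module.End.mul_apply, hP.mul_eq]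
    split_ifs with hij
    · rw [hij]
    · rfl
  refine ⟨b, fun i => ?_⟩
  ext k j
  rw [LinearMap.toMatrixAlgEquiv_apply, hPb, single_apply]
  by_cases hij : i = j
  · simp [hij, Finsupp.single_apply, eq_comm]
  · simp [hij]

theorem finrank_eq_card_of_finrank_range_le_one [Module.Finite K V]
    (hP : CompleteOrthogonalIdempotents P) (hP0 : ∀ i, P i ≠ 0)
    (hrank : ∀ i, Module.finrank K (LinearMap.range (P i)) ≤ 1) :
    Module.finrank K V = Fintype.card ι := by
  obtain ⟨v, hv⟩ := exists_linearIndependent_of_idempotents hP.toOrthogonalIdempotents hP0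
  refine le_antisymm ?_ hv.fintype_card_le_finrank
  have hinj : Function.Injective (LinearMap.pi fun i => (P i).rangeRestrict) := by
    refine (injective_iff_map_eq_zero _).2 fun w hw => ?_
    have hPw (i : ι) : P i w = 0 := congrArg Subtype.val (congrFun hw i)
    simpa [hPw] using (LinearMap.congr_fun hP.complete w).symm
  calc Module.finrank K V
      ≤ Module.finrank K (∀ i, LinearMap.range (P i)) :=
        LinearMap.finrank_le_finrank_of_injective hinj
    _ = ∑ i, Module.finrank K (LinearMap.range (P i)) := Module.finrank_pi_fintype K
    _ ≤ ∑ _i : ι, 1 := Finset.sum_le_sum fun i _ => hrank i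
    _ = Fintype.card ι := by simp

end IdempotentEndomorphisms

section IrreducibleTridiagonal

/-- An element `b` is irreducible tridiagonal with respect to a family `e 0, …, e d`: the block
`e i * b * e j` vanishes for `|i - j| > 1` and is nonzero for `|i - j| = 1`. For the diagonal matrix
units this is the usual notion for matrices. -/
structure IsIrreducibleTridiagonal {R : Type*} [MonoidWithZero R] {d : ℕ} (e : Fin (d + 1) → R)
    (b : R) : Prop where
  mul_mul_eq_zero : ∀ i j : Fin (d + 1), (i : ℕ) + 1 < j ∨ (j : ℕ) + 1 < i → e i * b * e j = 0
  mul_mul_ne_zero_below : ∀ i : Fin d, e i.succ * b * e i.castSucc ≠ 0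
  mul_mul_ne_zero_above : ∀ i : Fin d, e i.castSucc * b * e i.succ ≠ 0

theorem IsIrreducibleTridiagonal.map {R R' F : Type*} [MonoidWithZero R] [MonoidWithZero R']
    [FunLike F R R'] [MonoidWithZeroHomClass F R R'] {d : ℕ} {e : Fin (d + 1) → R} {b : R}
    (h : IsIrreducibleTridiagonal e b) (f : F) (hf : Function.Injective f) :
    IsIrreducibleTridiagonal (fun i => f (e i)) (f b) where
  mul_mul_eq_zero i j hij := by simp only [← map_mul, h.mul_mul_eq_zero i j hij, map_zero]
  mul_mul_ne_zero_below i := by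
    simpa only [← map_mul, ne_eq, map_eq_zero_iff f hf] using h.mul_mul_ne_zero_below i
  mul_mul_ne_zero_above i := by
    simpa only [← map_mul, ne_eq, map_eq_zero_iff f hf] using h.mul_mul_ne_zero_above i

variable {K : Type*} [Field K] {d : ℕ} {M : Matrix (Fin (d + 1)) (Fin (d + 1)) K}

theorem single_mul_mul_single_eq_zero_iff (i j : Fin (d + 1)) :
    single i i 1 * M * single j j 1 = 0 ↔ M i j = 0 := by
  simp [← Matrix.ext_iff, single_apply]

theorem single_mem_of_hessenberg {n : Type*} [DecidableEq n]
    {U : Submodule K (Matrix (Fin (d + 1)) n K)} {l : n}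
    (hM : ∀ i j : Fin (d + 1), (j : ℕ) + 1 < i → M i j = 0)
    (hsub : ∀ i : Fin d, M i.succ i.castSucc ≠ 0) (hU : ∀ N ∈ U, M * N ∈ U)
    (h0 : single 0 l 1 ∈ U) (i : Fin (d + 1)) : single i l 1 ∈ U := by
  suffices h : ∀ k ≤ i, single k l 1 ∈ U from h i le_rfl
  induction i using Fin.induction with
  | zero => simpa using h0
  | succ i ih =>
    have hcol : M * single i.castSucc l (1 : K) = ∑ k, M k i.castSucc • single k l 1 := by
      ext a b
      simp [mul_apply, single_apply, Matrix.sum_apply, ite_and]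
    have hother : ∀ k ∈ Finset.univ.erase i.succ, M k i.castSucc • single k l 1 ∈ U := by
      intro k hk
      rcases lt_or_gt_of_ne (Finset.ne_of_mem_erase hk) with hlt | hgt
      · exact U.smul_mem _ (ih k (Fin.le_castSucc_iff.2 hlt))
      · rw [hM k i.castSucc (by simpa [Fin.lt_def] using hgt), zero_smul]
        exact U.zero_mem
    have hsucc : M i.succ i.castSucc • single i.succ l 1 ∈ U := by
      have hmem := hU _ (ih i.castSucc le_rfl)
      rw [hcol, ← Finset.add_sum_erase _ _ (Finset.mem_univ i.succ)] at hmem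
      exact (U.add_mem_iff_left (U.sum_mem hother)).1 hmem
    intro k hk
    rcases hk.eq_or_lt with rfl | hlt
    · exact (U.smul_mem_iff (hsub i)).1 hsucc
    · exact ih k (Fin.le_castSucc_iff.2 hlt)

theorem IsIrreducibleTridiagonal.adjoin_single_eq_top
    (h : IsIrreducibleTridiagonal (fun i => single i i (1 : K)) M) :
    Algebra.adjoin K {M, single 0 0 1} = ⊤ := by
  set S := Algebra.adjoin K {M, single 0 0 1}
  have hMS : M ∈ S := Algebra.subset_adjoin (Set.mem_insert _ _)
  have h00 : single 0 0 1 ∈ S := Algebra.subset_adjoin (Set.mem_insert_of_mem _ rfl)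
  have hzero (i j : Fin (d + 1)) (hij : (i : ℕ) + 1 < j ∨ (j : ℕ) + 1 < i) : M i j = 0 :=
    (single_mul_mul_single_eq_zero_iff i j).1 (h.mul_mul_eq_zero i j hij)
  have hcol (i : Fin (d + 1)) : single i 0 1 ∈ S.toSubmodule :=
    single_mem_of_hessenberg (fun i j hij => hzero i j (Or.inr hij))
      (fun i => mt (single_mul_mul_single_eq_zero_iff _ _).2 (h.mul_mul_ne_zero_below i))
      (fun N hN => S.mul_mem hMS hN) h00 i
  have hrow (j : Fin (d + 1)) : single 0 j 1 ∈ S := by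
    let U := S.toSubmodule.comap (transposeLinearEquiv (Fin (d + 1)) (Fin (d + 1)) K K).toLinearMap
    have hU : ∀ N ∈ U, Mᵀ * N ∈ U := fun N hN => by
      have hmul : Nᵀ * M ∈ S := S.mul_mem hN hMS
      simpa [U] using hmul
    have hj : single j 0 1 ∈ U :=
      single_mem_of_hessenberg (fun i j hij => hzero j i (Or.inl hij))
        (fun i => mt (single_mul_mul_single_eq_zero_iff _ _).2 (h.mul_mul_ne_zero_above i)) hU
        (by simpa [U] using h00) j
    simpa [U] using hj
  refine Algebra.eq_top_iff.2 fun N => ?_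
  rw [matrix_eq_sum_single N]
  refine S.sum_mem fun i _ => S.sum_mem fun j _ => ?_
  have hij : single i j (N i j) = N i j • (single i 0 1 * single 0 j 1) := by simp
  exact hij ▸ S.smul_mem (S.mul_mem (hcol i) (hrow j)) _

end IrreducibleTridiagonal

section IrreduciblePair

variable {K V : Type*} [Field K] [AddCommGroup V] [Module K V]

/-- Two endomorphisms act irreducibly if `0` and `V` are the only subspaces invariant under both.
For a generating pair of an algebra acting on `V ≠ 0` this says that `V` is a simple module. -/
def IsIrreduciblePair (A B : Module.End K V) : Prop :=
  ∀ U ∈ A.invtSubmodule, U ∈ B.invtSubmodule → U = ⊥ ∨ U = ⊤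

theorem IsIrreduciblePair.symm {A B : Module.End K V} (h : IsIrreduciblePair A B) :
    IsIrreduciblePair B A :=
  fun U hB hA => h U hA hB

theorem iInf_ker_mem_invtSubmodule {ι : Type*} [Fintype ι] {P : ι → Module.End K V}
    (hP : CompleteOrthogonalIdempotents P) {C : Module.End K V} {s : Set ι}
    (hC : ∀ k ∈ s, ∀ j ∉ s, P j * C * P k = 0) :
    ⨅ j ∈ sᶜ, LinearMap.ker (P j) ∈ C.invtSubmodule := by
  refine (Module.End.mem_invtSubmodule_iff_forall_mem_of_mem C).2 fun w hw => ?_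
  simp only [Submodule.mem_iInf, Set.mem_compl_iff, LinearMap.mem_ker] at hw ⊢
  intro j hj
  have hw_sum : w = ∑ k, P k w := by simpa using (LinearMap.congr_fun hP.complete w).symm
  rw [hw_sum, map_sum, map_sum]
  refine Finset.sum_eq_zero fun k _ => ?_
  by_cases hk : k ∈ s
  · exact LinearMap.congr_fun (hC k hk j hj) w
  · rw [hw k hk, map_zero, map_zero]

variable {A B : Module.End K V}

theorem IsIrreduciblePair.exists_mul_mul_ne_zero {ι : Type*} [Fintype ι] {P : ι → Module.End K V}
    (hAB : IsIrreduciblePair A B) (hB : IsSpectralDecomposition K B P) (hP0 : ∀ i, P i ≠ 0)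
    {s : Set ι} {i j : ι} (hi : i ∈ s) (hj : j ∉ s) :
    ∃ k ∈ s, ∃ l ∉ s, P l * A * P k ≠ 0 := by
  by_contra! hA
  have hP := hB.toCompleteOrthogonalIdempotents
  rcases hAB _ (iInf_ker_mem_invtSubmodule hP hA) (iInf_ker_mem_invtSubmodule hP fun k hk l hl =>
    hB.mul_mul_eq_zero (ne_of_mem_of_not_mem hk hl).symm) with hbot | htop
  · refine hP0 i (LinearMap.ext fun v => ?_)
    have hmem : P i v ∈ ⨅ l ∈ sᶜ, LinearMap.ker (P l) := by
      simp only [Submodule.mem_iInf, LinearMap.mem_ker]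
      exact fun l hl => LinearMap.congr_fun (hP.ortho (ne_of_mem_of_not_mem hi hl).symm) v
    rwa [hbot, Submodule.mem_bot] at hmem
  · refine hP0 j (LinearMap.ker_eq_top.1 (top_le_iff.1 ?_))
    exact htop ▸ iInf₂_le j hj

theorem IsIrreduciblePair.isIrreducibleTridiagonal {d : ℕ} {P : Fin (d + 1) → Module.End K V}
    (hAB : IsIrreduciblePair A B) (hB : IsSpectralDecomposition K B P) (hP0 : ∀ i, P i ≠ 0)
    (hA : ∀ i j : Fin (d + 1), (i : ℕ) + 1 < j ∨ (j : ℕ) + 1 < i → P i * A * P j = 0) :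
    IsIrreducibleTridiagonal P A where
  mul_mul_eq_zero := hA
  mul_mul_ne_zero_below i := by
    obtain ⟨k, hk, l, hl, hne⟩ := hAB.exists_mul_mul_ne_zero hB hP0
      (s := Set.Iic i.castSucc) (j := i.succ) Set.self_mem_Iic (by simp)
    have hgap := mt (hA l k) hne
    simp only [Set.mem_Iic, Fin.le_def, Fin.val_castSucc] at hk hl
    obtain rfl : k = i.castSucc := Fin.ext (by rw [Fin.val_castSucc]; omega)
    obtain rfl : l = i.succ := Fin.ext (by rw [Fin.val_succ]; omega)
    exact hne
  mul_mul_ne_zero_above i := by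
    obtain ⟨k, hk, l, hl, hne⟩ := hAB.exists_mul_mul_ne_zero hB hP0
      (s := Set.Ici i.succ) (j := i.castSucc) Set.self_mem_Ici (by simp)
    have hgap := mt (hA l k) hne
    simp only [Set.mem_Ici, Fin.le_def, Fin.val_succ] at hk hl
    obtain rfl : k = i.succ := Fin.ext (by rw [Fin.val_succ]; omega)
    obtain rfl : l = i.castSucc := Fin.ext (by rw [Fin.val_castSucc]; omega)
    exact hne

end IrreduciblePair

section LeonardSystem

variable {K V : Type*} [Field K] [AddCommGroup V] [Module K V] {d : ℕ}

/-- A Leonard system of diameter `d` on `V`: two endomorphisms, each diagonalizable with `d + 1`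
one-dimensional eigenspaces, and orderings of their primitive idempotents for which each
endomorphism is irreducible tridiagonal with respect to the idempotents of the other. That the
eigenspaces are one-dimensional is expressed by `Module.finrank K V = d + 1`. -/
structure IsLeonardSystem (A Astar : Module.End K V) (E Estar : Fin (d + 1) → Module.End K V) :
    Prop where
  finrank_eq : Module.finrank K V = d + 1
  spectral : IsSpectralDecomposition K A E
  spectral_star : IsSpectralDecomposition K Astar Estar
  ne_zero : ∀ i, E i ≠ 0
  ne_zero_star : ∀ i, Estar i ≠ 0
  tridiagonal : IsIrreducibleTridiagonal Estar A
  tridiagonal_star : IsIrreducibleTridiagonal E Astar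

namespace IsLeonardSystem

variable {A Astar : Module.End K V} {E Estar : Fin (d + 1) → Module.End K V}

theorem dual (h : IsLeonardSystem A Astar E Estar) : IsLeonardSystem Astar A Estar E :=
  ⟨h.finrank_eq, h.spectral_star, h.spectral, h.ne_zero_star, h.ne_zero, h.tridiagonal_star,
    h.tridiagonal⟩

theorem adjoin_idempotent_zero_eq_top (h : IsLeonardSystem A Astar E Estar) :
    Algebra.adjoin K {A, Estar 0} = ⊤ := by
  obtain ⟨b, hb⟩ := exists_basis_toMatrixAlgEquiv_eq_single
    h.spectral_star.toCompleteOrthogonalIdempotents h.ne_zero_star (by simp [h.finrank_eq])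
  let f := LinearMap.toMatrixAlgEquiv b
  have htri : IsIrreducibleTridiagonal (fun i => single i i (1 : K)) (f A) := by
    simpa only [f, hb] using h.tridiagonal.map f f.injective
  refine Subalgebra.map_injective (f := f.toAlgHom) f.injective ?_
  calc (Algebra.adjoin K {A, Estar 0}).map f.toAlgHom
      = Algebra.adjoin K {f A, single 0 0 1} := by
        simp [AlgHom.map_adjoin, Set.image_pair, f, hb]
    _ = ⊤ := htri.adjoin_single_eq_top
    _ = (⊤ : Subalgebra K (Module.End K V)).map f.toAlgHom :=
        (Algebra.map_top _).trans ((AlgHom.range_eq_top _).2 f.surjective) |>.symm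

theorem adjoin_pair_eq_top (h : IsLeonardSystem A Astar E Estar) :
    Algebra.adjoin K {A, Astar} = ⊤ := by
  have hEstar : Estar 0 ∈ Algebra.adjoin K {A, Astar} :=
    Algebra.adjoin_mono (Set.subset_insert A {Astar}) (h.spectral_star.mem_adjoin 0)
  rw [← top_le_iff, ← h.adjoin_idempotent_zero_eq_top]
  exact Algebra.adjoin_le (Set.pair_subset (Algebra.subset_adjoin (Set.mem_insert _ _)) hEstar)

end IsLeonardSystem

theorem stmt2_general {A Astar : Module.End K V} {E Estar : Fin (d + 1) → Module.End K V}
    (h : IsLeonardSystem A Astar E Estar) :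
    Algebra.adjoin K {A, Astar} = ⊤ ∧ Algebra.adjoin K {A, Estar 0} = ⊤ ∧
      Algebra.adjoin K {Astar, E 0} = ⊤ :=
  ⟨h.adjoin_pair_eq_top, h.adjoin_idempotent_zero_eq_top, h.dual.adjoin_idempotent_zero_eq_top⟩

end LeonardSystem

section HadamardVanishing

variable {n R : Type*} [Fintype n] [DecidableEq n] [CommRing R] [PartialOrder R] [StarRing R]
  [StarOrderedRing R] [NoZeroDivisors R]

-- With `N = P * diagonal v * Q`, the trace of `N * Nᴴ` is the quadratic form of `Q ⊙ Pᵀ` at `v`.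
theorem mul_diagonal_mul_eq_zero_of_vecMul_hadamard {P Q : Matrix n n R} (hP : IsStarProjection P)
    (hQ : IsStarProjection Q) {v : n → R} (hv : v ᵥ* (Q ⊙ Pᵀ) = 0) : P * diagonal v * Q = 0 := by
  rw [← trace_mul_conjTranspose_self_eq_zero_iff]
  have hPH : Pᴴ = P := hP.isSelfAdjoint
  have hQH : Qᴴ = Q := hQ.isSelfAdjoint
  have hPP : P * P = P := hP.isIdempotentElem
  have hQQ : Q * Q = Q := hQ.isIdempotentElem
  calc trace (P * diagonal v * Q * (P * diagonal v * Q)ᴴ)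
      = trace (P * (diagonal v * (Q * Q) * diagonal (star v) * P)) := by
        simp only [conjTranspose_mul, hPH, hQH, diagonal_conjTranspose, Matrix.mul_assoc]
    _ = trace (diagonal v * Q * diagonal (star v) * (P * P)) := by
        rw [trace_mul_comm, hQQ, Matrix.mul_assoc _ P P]
    _ = v ᵥ* (Q ⊙ Pᵀ) ⬝ᵥ star v := by
        simp only [hPP, dotProduct_vecMul_hadamard, transpose_mul, transpose_transpose,
          diagonal_transpose, Matrix.mul_assoc]
    _ = 0 := by rw [hv, zero_dotProduct]

end HadamardVanishing

namespace TSetup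

variable (S : TSetup X)

theorem A_mem_T : S.A ∈ S.T := Algebra.subset_adjoin (Set.mem_insert _ _)

theorem Astar_mem_T : S.Astar ∈ S.T := Algebra.subset_adjoin (Set.mem_insert_of_mem _ rfl)

theorem Estar_eq_diagonal (i : ℕ) :
    S.Estar i = diagonal fun y => if S.G.dist S.x y = i then 1 else 0 := by
  ext y z
  by_cases hi : i ≤ S.D
  · by_cases hyz : y = z <;> simp [S.hEstar i hi, hyz]
  · have hne : S.G.dist S.x y ≠ i := fun h => hi (h ▸ S.hDiamLe S.x y)
    simp [S.hEstarzero i (not_le.1 hi), diagonal_apply, hne]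

theorem isSpectralDecomposition_A :
    IsSpectralDecomposition ℂ S.A fun i : Fin (S.D + 1) => S.E i where
  idem i := by simpa [IsIdempotentElem] using S.hEidem i i i.is_le i.is_le
  ortho i j hij := by simp [S.hEidem i j i.is_le j.is_le, Fin.val_inj, hij]
  complete := by rw [← S.hEsum, Finset.sum_range]
  exists_eigenvalues := ⟨fun i => S.θ i,
    fun i j h => Fin.ext (S.hθinj i j i.is_le j.is_le (Complex.ofReal_injective h)),
    by rw [S.hAspec, Finset.sum_range]⟩

theorem isSpectralDecomposition_Astar :
    IsSpectralDecomposition ℂ S.Astar fun i : Fin (S.D + 1) => S.Estar i where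
  idem i := by simp [IsIdempotentElem, S.Estar_eq_diagonal]
  ortho i j hij := by
    have hne : ¬(i : ℕ) = j := fun h => hij (Fin.ext h)
    simp only [S.Estar_eq_diagonal, diagonal_mul_diagonal, diagonal_eq_zero]
    ext y
    by_cases hy : S.G.dist S.x y = i <;> simp [hy, hne]
  complete := by
    ext y z
    rw [← Finset.sum_range fun i => S.Estar i, Matrix.sum_apply]
    rcases eq_or_ne y z with rfl | hyz
    · simp [S.Estar_eq_diagonal, Nat.lt_succ_iff.2 (S.hDiamLe S.x y)]
    · simp [hyz, S.Estar_eq_diagonal]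
  exists_eigenvalues := ⟨fun i => S.θstar i,
    fun i j h => Fin.ext (S.hθstarinj i j i.is_le j.is_le (Complex.ofReal_injective h)),
    by rw [S.hAstarspec, Finset.sum_range]⟩

theorem E_mem_T (i : ℕ) : S.E i ∈ S.T := by
  by_cases hi : i ≤ S.D
  · exact Algebra.adjoin_le (Set.singleton_subset_iff.2 S.A_mem_T)
      (S.isSpectralDecomposition_A.mem_adjoin ⟨i, Nat.lt_succ_iff.2 hi⟩)
  · exact S.hEzero i (not_le.1 hi) ▸ S.T.zero_mem

theorem Estar_mem_T (i : ℕ) : S.Estar i ∈ S.T := by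
  by_cases hi : i ≤ S.D
  · exact Algebra.adjoin_le (Set.singleton_subset_iff.2 S.Astar_mem_T)
      (S.isSpectralDecomposition_Astar.mem_adjoin ⟨i, Nat.lt_succ_iff.2 hi⟩)
  · exact S.hEstarzero i (not_le.1 hi) ▸ S.T.zero_mem

theorem Estar_mul_A_mul_Estar_eq_zero {i j : ℕ} (hij : i + 1 < j ∨ j + 1 < i) :
    S.Estar i * S.A * S.Estar j = 0 := by
  ext y z
  rw [S.Estar_eq_diagonal, S.Estar_eq_diagonal, mul_diagonal, diagonal_mul, S.hA]
  by_cases hyz : S.G.Adj y z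
  · have hy := S.hGconn.dist_triangle (u := S.x) (v := y) (w := z)
    have hz := S.hGconn.dist_triangle (u := S.x) (v := z) (w := y)
    rw [SimpleGraph.dist_eq_one_iff_adj.2 hyz] at hy
    rw [SimpleGraph.dist_eq_one_iff_adj.2 hyz.symm] at hz
    split_ifs <;> first | omega | simp
  · simp [hyz]

theorem isStarProjection_E {i : ℕ} (hi : i ≤ S.D) : IsStarProjection (S.E i) where
  isIdempotentElem := by simpa [IsIdempotentElem] using S.hEidem i i hi hi
  isSelfAdjoint := by
    rw [IsSelfAdjoint, star_eq_conjTranspose, conjTranspose, S.hEsymm]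
    exact S.hEreal i

theorem E_one_mul_hadamard_eq_zero {i j : ℕ} (hi : i ≤ S.D) (hj : j ≤ S.D)
    (hij : i + 1 < j ∨ j + 1 < i) : S.E 1 * (S.E j ⊙ S.E i) = 0 := by
  have hD : 1 ≤ S.D := by have := S.hD3; omega
  rw [S.hKrein j i hj hi, Matrix.mul_smul, Finset.mul_sum, Finset.sum_eq_zero, smul_zero]
  intro h hh
  rw [Matrix.mul_smul, S.hEidem 1 h hD (Finset.mem_range_succ_iff.1 hh)]
  split_ifs with h1
  · rw [← h1, S.hQpoly0 1 j i hD hj hi (by omega), Complex.ofReal_zero, zero_smul]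
  · exact smul_zero _

open scoped ComplexOrder in
theorem E_mul_Astar_mul_E_eq_zero {i j : ℕ} (hi : i ≤ S.D) (hj : j ≤ S.D)
    (hij : i + 1 < j ∨ j + 1 < i) : S.E i * S.Astar * S.E j = 0 := by
  have hAstar : S.Astar = diagonal ((Fintype.card X : ℂ) • S.E 1 S.x) := by
    ext y z
    simp [S.hAstar, diagonal_apply]
  rw [hAstar]
  refine mul_diagonal_mul_eq_zero_of_vecMul_hadamard (S.isStarProjection_E hi)
    (S.isStarProjection_E hj) ?_
  have hrow : S.E 1 S.x ᵥ* (S.E j ⊙ S.E i) = 0 :=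
    congrFun (S.E_one_mul_hadamard_eq_zero hi hj hij) S.x
  rw [S.hEsymm, smul_vecMul, hrow, smul_zero]

end TSetup

theorem mulVec_mem_of_mem_adjoin {n K : Type*} [Fintype n] [DecidableEq n] [CommSemiring K]
    {s : Set (Matrix n n K)} {U : Submodule K (n → K)} (hs : ∀ B ∈ s, ∀ w ∈ U, B *ᵥ w ∈ U)
    {B : Matrix n n K} (hB : B ∈ Algebra.adjoin K s) : ∀ w ∈ U, B *ᵥ w ∈ U := by
  induction hB using Algebra.adjoin_induction with
  | mem B hB => exact hs B hB
  | algebraMap c =>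
    intro w hw
    rw [Algebra.algebraMap_eq_smul_one, smul_mulVec, one_mulVec]
    exact U.smul_mem c hw
  | add B C _ _ hB hC =>
    intro w hw
    rw [add_mulVec]
    exact U.add_mem (hB w hw) (hC w hw)
  | mul B C _ _ hB hC =>
    intro w hw
    rw [← mulVec_mulVec]
    exact hB _ (hC w hw)

namespace TMod

variable {S : TSetup X} (M : TMod S)

/-- The representation of the Terwilliger algebra on the module `W`. On `T` it agrees with `actW`,
which, being defined on all matrices, is not itself an algebra homomorphism. -/
def rep : S.T →ₐ[ℂ] Module.End ℂ M.W where
  toFun B := B.1.mulVecLin.restrict (M.hWinv B B.2)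
  map_one' := LinearMap.ext fun w => Subtype.ext (one_mulVec w.1)
  map_mul' B C := LinearMap.ext fun w => Subtype.ext (mulVec_mulVec w.1 B.1 C.1).symm
  map_zero' := LinearMap.ext fun w => Subtype.ext (zero_mulVec w.1)
  map_add' B C := LinearMap.ext fun w => Subtype.ext (add_mulVec B.1 C.1 w.1)
  commutes' c := LinearMap.ext fun w => Subtype.ext (by
    simp [Algebra.algebraMap_eq_smul_one])

theorem actW_eq_rep {B : Matrix X X ℂ} (hB : B ∈ S.T) : actW S M B = M.rep ⟨B, hB⟩ :=
  dif_pos (M.hWinv B hB)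

theorem coe_actW_apply {B : Matrix X X ℂ} (hB : B ∈ S.T) (w : M.W) :
    (actW S M B w : X → ℂ) = B *ᵥ w := by
  rw [M.actW_eq_rep hB]
  rfl

theorem actW_mul_mul_eq_zero {B C C' : Matrix X X ℂ} (hB : B ∈ S.T) (hC : C ∈ S.T)
    (hC' : C' ∈ S.T) (h : B * C * C' = 0) : actW S M B * actW S M C * actW S M C' = 0 := by
  have hT : (⟨B, hB⟩ * ⟨C, hC⟩ * ⟨C', hC'⟩ : S.T) = 0 := Subtype.ext h
  rw [M.actW_eq_rep hB, M.actW_eq_rep hC, M.actW_eq_rep hC', ← map_mul, ← map_mul, hT, map_zero]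

theorem map_subtype_range_actW {B : Matrix X X ℂ} (hB : B ∈ S.T) :
    (LinearMap.range (actW S M B)).map M.W.subtype = M.W.map B.mulVecLin := by
  have hcomp : M.W.subtype ∘ₗ actW S M B = B.mulVecLin ∘ₗ M.W.subtype :=
    LinearMap.ext (M.coe_actW_apply hB)
  rw [← LinearMap.range_comp, hcomp, LinearMap.range_comp, Submodule.range_subtype]

theorem actW_ne_zero_iff {B : Matrix X X ℂ} (hB : B ∈ S.T) :
    actW S M B ≠ 0 ↔ M.W.map B.mulVecLin ≠ ⊥ := by
  rw [← M.map_subtype_range_actW hB, ne_eq, ne_eq,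
    (Submodule.map_injective_of_injective M.W.injective_subtype).eq_iff' (Submodule.map_bot _),
    LinearMap.range_eq_bot]

theorem isSpectralDecomposition_actW {ι : Type*} [Fintype ι] {B : Matrix X X ℂ}
    {F : ι → Matrix X X ℂ} (hB : B ∈ S.T) (hF : ∀ i, F i ∈ S.T)
    (h : IsSpectralDecomposition ℂ B F) :
    IsSpectralDecomposition ℂ (actW S M B) fun i => actW S M (F i) := by
  have hT : IsSpectralDecomposition ℂ (⟨B, hB⟩ : S.T) fun i => ⟨F i, hF i⟩ :=
    .of_map (f := S.T.val) Subtype.val_injective h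
  simpa only [M.actW_eq_rep hB, M.actW_eq_rep (hF _)] using hT.map (R' := Module.End ℂ M.W) M.rep

theorem endpoint_add_diameter_le : M.r + M.d ≤ S.D := by
  by_contra! h
  exact (M.hr (M.r + M.d)).2 ⟨Nat.le_add_right _ _, le_rfl⟩ (by simp [S.hEstarzero _ h])

theorem dualEndpoint_add_diameter_le : M.t + M.d ≤ S.D := by
  by_contra! h
  exact (M.ht (M.t + M.d)).2 ⟨Nat.le_add_right _ _, le_rfl⟩ (by simp [S.hEzero _ h])

theorem actW_E_ne_zero_iff (i : ℕ) : actW S M (S.E i) ≠ 0 ↔ i ∈ Set.Icc M.t (M.t + M.d) :=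
  (M.actW_ne_zero_iff (S.E_mem_T i)).trans (M.ht i)

theorem actW_Estar_ne_zero_iff (i : ℕ) :
    actW S M (S.Estar i) ≠ 0 ↔ i ∈ Set.Icc M.r (M.r + M.d) :=
  (M.actW_ne_zero_iff (S.Estar_mem_T i)).trans (M.hr i)

theorem isSpectralDecomposition_actW_A :
    IsSpectralDecomposition ℂ (actW S M S.A) fun i : Fin (M.d + 1) => actW S M (S.E (M.t + i)) :=
  .of_eq_zero_of_notMem_Icc (e := fun i => actW S M (S.E i))
    (M.isSpectralDecomposition_actW S.A_mem_T (fun i => S.E_mem_T i) S.isSpectralDecomposition_A)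
    M.dualEndpoint_add_diameter_le fun i _ => not_imp_comm.1 (M.actW_E_ne_zero_iff i).1

theorem isSpectralDecomposition_actW_Astar :
    IsSpectralDecomposition ℂ (actW S M S.Astar)
      fun i : Fin (M.d + 1) => actW S M (S.Estar (M.r + i)) :=
  .of_eq_zero_of_notMem_Icc (e := fun i => actW S M (S.Estar i))
    (M.isSpectralDecomposition_actW S.Astar_mem_T (fun i => S.Estar_mem_T i)
      S.isSpectralDecomposition_Astar)
    M.endpoint_add_diameter_le fun i _ => not_imp_comm.1 (M.actW_Estar_ne_zero_iff i).1

theorem actW_E_ne_zero (i : Fin (M.d + 1)) : actW S M (S.E (M.t + i)) ≠ 0 :=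
  (M.actW_E_ne_zero_iff _).2 ⟨by omega, by omega⟩

theorem actW_Estar_ne_zero (i : Fin (M.d + 1)) : actW S M (S.Estar (M.r + i)) ≠ 0 :=
  (M.actW_Estar_ne_zero_iff _).2 ⟨by omega, by omega⟩

theorem finrank_eq : Module.finrank ℂ M.W = M.d + 1 := by
  have hrank (i : Fin (M.d + 1)) :
      Module.finrank ℂ (LinearMap.range (actW S M (S.Estar (M.r + i)))) ≤ 1 := by
    rw [← Submodule.finrank_map_subtype_eq, M.map_subtype_range_actW (S.Estar_mem_T _)]
    exact M.hthin _
  simpa using finrank_eq_card_of_finrank_range_le_one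
    M.isSpectralDecomposition_actW_Astar.toCompleteOrthogonalIdempotents M.actW_Estar_ne_zero hrank

theorem isIrreduciblePair_actW : IsIrreduciblePair (actW S M S.A) (actW S M S.Astar) := by
  intro U hA hAstar
  have hgen : ∀ B ∈ ({S.A, S.Astar} : Set (Matrix X X ℂ)), ∀ w ∈ U.map M.W.subtype,
      B *ᵥ w ∈ U.map M.W.subtype := by
    rintro B (rfl | rfl) _ ⟨u, hu, rfl⟩
    · exact ⟨_, hA hu, M.coe_actW_apply S.A_mem_T u⟩
    · exact ⟨_, hAstar hu, M.coe_actW_apply S.Astar_mem_T u⟩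
  have hinj := Submodule.map_injective_of_injective M.W.injective_subtype
  rcases M.hWirr (U.map M.W.subtype) (Submodule.map_subtype_le _ _)
    fun B hB => mulVec_mem_of_mem_adjoin hgen hB with hbot | htop
  · exact Or.inl (hinj (hbot.trans (Submodule.map_bot _).symm))
  · exact Or.inr (hinj (htop.trans (Submodule.map_subtype_top _).symm))

theorem isLeonardSystem :
    IsLeonardSystem (actW S M S.A) (actW S M S.Astar)
      (fun i : Fin (M.d + 1) => actW S M (S.E (M.t + i)))
      (fun i : Fin (M.d + 1) => actW S M (S.Estar (M.r + i))) where
  finrank_eq := M.finrank_eq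
  spectral := M.isSpectralDecomposition_actW_A
  spectral_star := M.isSpectralDecomposition_actW_Astar
  ne_zero := M.actW_E_ne_zero
  ne_zero_star := M.actW_Estar_ne_zero
  tridiagonal := M.isIrreduciblePair_actW.isIrreducibleTridiagonal
    M.isSpectralDecomposition_actW_Astar M.actW_Estar_ne_zero fun i j hij =>
      M.actW_mul_mul_eq_zero (S.Estar_mem_T _) S.A_mem_T (S.Estar_mem_T _)
        (S.Estar_mul_A_mul_Estar_eq_zero (by omega))
  tridiagonal_star := M.isIrreduciblePair_actW.symm.isIrreducibleTridiagonal
    M.isSpectralDecomposition_actW_A M.actW_E_ne_zero fun i j hij =>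
      have hle (k : Fin (M.d + 1)) : M.t + k ≤ S.D := by
        have := M.dualEndpoint_add_diameter_le
        omega
      M.actW_mul_mul_eq_zero (S.E_mem_T _) S.Astar_mem_T (S.E_mem_T _)
        (S.E_mul_Astar_mul_E_eq_zero (hle i) (hle j) (by omega))

end TMod

/-- The restrictions of `A, A*` to `W` generate the algebra `End(W)`; so do the
restrictions of `A, E*_r`, and the restrictions of `A*, E_t`. -/
theorem stmt2 (S : TSetup X) (M : TMod S) (hd : 0 < M.d) :
    Algebra.adjoin ℂ ({actW S M S.A, actW S M S.Astar} : Set (Module.End ℂ M.W)) = ⊤ ∧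
    Algebra.adjoin ℂ ({actW S M S.A, actW S M (S.Estar M.r)} : Set (Module.End ℂ M.W)) = ⊤ ∧
    Algebra.adjoin ℂ ({actW S M S.Astar, actW S M (S.E M.t)} : Set (Module.End ℂ M.W)) = ⊤ := by
  simpa using stmt2_general M.isLeonardSystem
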